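/- arXiv:1806.05897 — 8 statements merged into one kernel-verified Lean document; each statement's English description precedes it below -/
import Mathlib

section
/- Let π and π' be duplicate-free lists over a finite type α, and assume π has at least 2 entries. Then π is a sublist of π' if and only if every complete ranking having π' as a sublist also has π as a sublist (i.e., the set of linear extensions E(π') is contained in E(π)). -/
open scoped Classical

/-!
Forward, the sublist relation is transitive. Conversely, let every linear extension of `l'` be one
of `l`. If an entry `x` of `l` were missing from `l'`, then some linear extension of `l'` would have
`x` at its bottom, and moving `x` to the top would give another one; in `l`, `x` would then be both
the first and the last entry, so `l = [x]`. Hence all entries of `l` occur in `l'`. Now take a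
linear extension `t ++ l'` of `l'`: its sublist `l` has no entries in `t`, so it is a sublist of
`l'`.
-/

section

variable {α : Type*} {l l' m p q t : List α} {x : α}

/-- A complete ranking: a duplicate-free list, read from the top position downward, in which every
object of `α` occurs. -/
def IsCompleteRanking (p : List α) : Prop :=
  p.Nodup ∧ ∀ x, x ∈ p

/-- The set `E(l)` of complete rankings that extend the ranking `l`. It makes sense for an arbitrary
list `l`, and is empty if `l` has duplicates. -/
def linearExtensions (l : List α) : Set (List α) :=
  {p | IsCompleteRanking p ∧ l.Sublist p}

lemma IsCompleteRanking.perm (hp : IsCompleteRanking p) (hpq : p.Perm q) : IsCompleteRanking q :=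
  ⟨hpq.nodup_iff.1 hp.1, fun x => hpq.mem_iff.1 (hp.2 x)⟩

lemma linearExtensions_subset_iff_forall :
    linearExtensions l' ⊆ linearExtensions l ↔
      ∀ p : List α, p.Nodup → (∀ x, x ∈ p) → l'.Sublist p → l.Sublist p :=
  ⟨fun h _ hnodup hmem hp => (h ⟨⟨hnodup, hmem⟩, hp⟩).2,
    fun h p ⟨hcomplete, hp⟩ => ⟨hcomplete, h p hcomplete.1 hcomplete.2 hp⟩⟩

lemma linearExtensions_subset_of_sublist (h : l.Sublist l') :
    linearExtensions l' ⊆ linearExtensions l :=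
  fun _ ⟨hcomplete, hp⟩ => ⟨hcomplete, h.trans hp⟩

lemma exists_isCompleteRanking_append [Finite α] (hl : l.Nodup) :
    ∃ t, IsCompleteRanking (t ++ l) := by
  have := Fintype.ofFinite α
  obtain ⟨t, -, ht⟩ := List.sublist_suffix_of_union Finset.univ.toList l
  refine ⟨t, ?_⟩
  rw [ht]
  exact ⟨hl.union _, fun x => List.mem_union_left (Finset.mem_toList.2 (Finset.mem_univ x)) l⟩

lemma sublist_right_of_sublist_append_of_disjoint (h : l.Sublist (t ++ m)) (hlt : l.Disjoint t) :
    l.Sublist m := by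
  obtain ⟨l₁, l₂, rfl, h₁, h₂⟩ := List.sublist_append_iff.1 h
  have hnil : l₁ = [] := List.eq_nil_iff_forall_not_mem.2 fun y hy =>
    hlt (List.mem_append_left l₂ hy) (h₁.subset hy)
  rwa [hnil, List.nil_append]

lemma eq_singleton_of_sublist_cons_of_sublist_concat (hxl : x ∈ l) (hxm : x ∉ m)
    (hcons : l.Sublist (x :: m)) (hconcat : l.Sublist (m ++ [x])) : l = [x] := by
  rcases List.sublist_cons_iff.1 hcons with hlm | ⟨t, rfl, -⟩
  · exact absurd (hlm.subset hxl) hxm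
  · rcases List.sublist_append_iff.1 hconcat with ⟨_ | ⟨y, l₁⟩, l₂, heq, h₁, h₂⟩
    · rw [List.nil_append] at heq
      exact (heq ▸ h₂).eq_of_length_le (by simp)
    · obtain ⟨rfl, -⟩ := List.cons.inj heq
      exact absurd (h₁.subset List.mem_cons_self) hxm

lemma subset_of_linearExtensions_subset [Finite α] (hl' : l'.Nodup) (hlen : l.length ≠ 1)
    (h : linearExtensions l' ⊆ linearExtensions l) : l ⊆ l' := by
  intro x hxl
  by_contra hxl'
  obtain ⟨t, ht⟩ := exists_isCompleteRanking_append (hl'.concat hxl')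
  rw [List.concat_eq_append, ← List.append_assoc] at ht
  have ht' : IsCompleteRanking (x :: (t ++ l')) := ht.perm (List.perm_append_singleton x _)
  have hsub : l'.Sublist (t ++ l') := List.sublist_append_right t l'
  have hconcat : l.Sublist (t ++ l' ++ [x]) :=
    (h ⟨ht, hsub.trans (List.sublist_append_left _ _)⟩).2
  have hcons : l.Sublist (x :: (t ++ l')) := (h ⟨ht', hsub.cons x⟩).2
  have hl : l = [x] :=
    eq_singleton_of_sublist_cons_of_sublist_concat hxl ht'.1.notMem hcons hconcat
  exact hlen (hl ▸ List.length_singleton)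

lemma sublist_of_subset_of_linearExtensions_subset [Finite α] (hl' : l'.Nodup) (hsub : l ⊆ l')
    (h : linearExtensions l' ⊆ linearExtensions l) : l.Sublist l' := by
  obtain ⟨t, ht⟩ := exists_isCompleteRanking_append hl'
  have hl : l.Sublist (t ++ l') := (h ⟨ht, List.sublist_append_right t l'⟩).2
  have hdisj : l.Disjoint t := List.disjoint_of_subset_left hsub ht.1.disjoint.symm
  exact sublist_right_of_sublist_append_of_disjoint hl hdisj

end

/-- for rankings with at least 2 entries, being a sublist is
equivalent to containment of the sets of linear extensions
(`E(π') ⊆ E(π)`). -/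
theorem sublist_iff_linearExtensions_subset {α : Type*} [Fintype α] [DecidableEq α]
    (π π' : List α) (hπ : π.Nodup) (hπ' : π'.Nodup) (hlen : 2 ≤ π.length) :
    π.Sublist π' ↔
      ∀ p : List α, p.Nodup → (∀ x : α, x ∈ p) → π'.Sublist p → π.Sublist p := by
  rw [← linearExtensions_subset_iff_forall]
  refine ⟨linearExtensions_subset_of_sublist, fun h => ?_⟩
  have hsub : π ⊆ π' := subset_of_linearExtensions_subset hπ' (by lia) h
  exact sublist_of_subset_of_linearExtensions_subset hπ' hsub h
end

section
/- If π_A and π_B are duplicate-free lists that are both sublists of a duplicate-free list π, then the list m obtained from π by keeping exactly those entries that belong to π_A or to π_B (List.filter) is an element of π_A ⊕ π_B and is a sublist of π. In particular, any transaction containing both π_A and π_B as sublists contains some element of π_A ⊕ π_B as a sublist. -/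
/-!
A sublist of a duplicate-free list is the restriction of that list to its own entries. Hence
`πA ⊕ πB` consists of the duplicate-free common superlists of `πA` and `πB` that have no entries
outside these two, and discarding such entries from `π` keeps `πA` and `πB` as sublists.
-/

open scoped Classical

/-- `oplus πA πB` is the set of consistent combinations of the rankings
`πA` and `πB`: duplicate-free lists over `entries(πA) ∪ entries(πB)` whose
restriction to the entries of `πA` (resp. `πB`) is `πA` (resp. `πB`). -/
def oplus {α : Type*} [DecidableEq α] (πA πB : List α) : Set (List α) :=
  {m | m.Nodup ∧ (∀ x, x ∈ m ↔ x ∈ πA ∨ x ∈ πB) ∧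
    m.filter (fun x => decide (x ∈ πA)) = πA ∧
    m.filter (fun x => decide (x ∈ πB)) = πB}

section

variable {α : Type*}

theorem sublist_filter_of_sublist_of_forall {l π : List α} {p : α → Bool}
    (hsub : l.Sublist π) (hp : ∀ x ∈ l, p x) : l.Sublist (π.filter p) :=
  List.sublist_filter_iff.2 ⟨l, hsub, (List.filter_eq_self.2 hp).symm⟩

theorem filter_mem_eq_self_of_sublist {l π : List α} [DecidablePred (· ∈ l)]
    (hπ : π.Nodup) (hsub : l.Sublist π) : π.filter (fun x => decide (x ∈ l)) = l := by
  have sublist_restriction : l.Sublist (π.filter (fun x => decide (x ∈ l))) :=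
    sublist_filter_of_sublist_of_forall hsub fun _ hx => decide_eq_true hx
  have restriction_subset : π.filter (fun x => decide (x ∈ l)) ⊆ l :=
    fun _ hx => of_decide_eq_true (List.mem_filter.1 hx).2
  exact (sublist_restriction.eq_of_length_le
    ((hπ.filter _).subperm restriction_subset).length_le).symm

variable [DecidableEq α]

theorem mem_oplus_iff_sublist {πA πB m : List α} :
    m ∈ oplus πA πB ↔
      m.Nodup ∧ πA.Sublist m ∧ πB.Sublist m ∧ ∀ x ∈ m, x ∈ πA ∨ x ∈ πB := by
  constructor
  · rintro ⟨hm, hmem, hA, hB⟩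
    exact ⟨hm, hA ▸ List.filter_sublist, hB ▸ List.filter_sublist, fun x => (hmem x).1⟩
  · rintro ⟨hm, hA, hB, hmem⟩
    exact ⟨hm, fun x => ⟨hmem x, fun h => h.elim (hA.subset ·) (hB.subset ·)⟩,
      filter_mem_eq_self_of_sublist hm hA, filter_mem_eq_self_of_sublist hm hB⟩

theorem filter_mem_oplus_of_sublist_general {πA πB π : List α} (hπ : π.Nodup)
    (hAsub : πA.Sublist π) (hBsub : πB.Sublist π) :
    π.filter (fun x => decide (x ∈ πA ∨ x ∈ πB)) ∈ oplus πA πB ∧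
      (π.filter (fun x => decide (x ∈ πA ∨ x ∈ πB))).Sublist π := by
  refine ⟨mem_oplus_iff_sublist.2 ⟨hπ.filter _, ?_, ?_, ?_⟩, List.filter_sublist⟩
  · exact sublist_filter_of_sublist_of_forall hAsub fun _ hx => decide_eq_true (Or.inl hx)
  · exact sublist_filter_of_sublist_of_forall hBsub fun _ hx => decide_eq_true (Or.inr hx)
  · exact fun _ hx => of_decide_eq_true (List.mem_filter.1 hx).2

end

/-- if `πA` and `πB` are both sublists of a duplicate-free list
`π`, then filtering `π` to the entries of `πA` or `πB` yields an element of
`πA ⊕ πB` that is a sublist of `π`. -/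
theorem filter_mem_oplus_of_sublist {α : Type*} [Fintype α] [DecidableEq α]
    (πA πB π : List α) (hA : πA.Nodup) (hB : πB.Nodup) (hπ : π.Nodup)
    (hAsub : πA.Sublist π) (hBsub : πB.Sublist π) :
    π.filter (fun x => decide (x ∈ πA ∨ x ∈ πB)) ∈ oplus πA πB ∧
      (π.filter (fun x => decide (x ∈ πA ∨ x ∈ πB))).Sublist π :=
  filter_mem_oplus_of_sublist_general hπ hAsub hBsub
end

section
/- For duplicate-free lists π_A, π_B over α and any database D, the multiset of transactions that contain some element of π_A ⊕ π_B as a sublist equals g(π_A) ∩ g(π_B); consequently supp(π_A ⊕ π_B), defined as the number of transactions containing some element of π_A ⊕ π_B, equals the cardinality of g(π_A) ∩ g(π_B). -/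
open scoped Classical

/-- `gcl D π` is the multiset of transactions of `D` of which `π` is a sublist. -/
noncomputable def gcl {α : Type*} (D : Multiset (List α)) (π : List α) :
    Multiset (List α) :=
  D.filter (fun t => π.Sublist t)

/-! A sublist of a duplicate-free list `t` is determined by its set of entries. Hence, if `t`
contains both `πA` and `πB`, the restriction of `t` to their entries is a consistent combination:
restricting it further to the entries of `πA` gives a sublist of `t` with the entries of `πA`, which
can only be `πA`, and likewise for `πB`. Conversely, `πA` and `πB` are sublists of each of their
consistent combinations, and so of every transaction containing one. -/

theorem eq_of_sublist_of_nodup_of_mem_iff {α : Type*} {l₁ l₂ l : List α} (hl : l.Nodup)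
    (h₁ : l₁.Sublist l) (h₂ : l₂.Sublist l) (h : ∀ x, x ∈ l₁ ↔ x ∈ l₂) : l₁ = l₂ :=
  (hl.perm_iff_eq_of_sublist h₁ h₂).1 <|
    (List.perm_ext_iff_of_nodup (hl.sublist h₁) (hl.sublist h₂)).2 h

theorem filter_inter_filter_eq_filter_and {β : Type*} [DecidableEq β] (p q : β → Prop)
    [DecidablePred p] [DecidablePred q] (s : Multiset β) :
    s.filter p ∩ s.filter q = s.filter (fun b => p b ∧ q b) := by
  ext b
  by_cases hp : p b <;> by_cases hq : q b <;> simp [hp, hq]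

theorem gcl_inter_gcl {α : Type*} [DecidableEq α] (D : Multiset (List α)) (πA πB : List α) :
    gcl D πA ∩ gcl D πB = D.filter (fun t => πA.Sublist t ∧ πB.Sublist t) := by
  unfold gcl
  -- `gcl` decides equality on `α` classically, so the two filters on the left carry other instances.
  convert filter_inter_filter_eq_filter_and πA.Sublist πB.Sublist D

section Oplus

variable {α : Type*} [DecidableEq α] {πA πB m t : List α}

theorem sublist_left_of_mem_oplus (hm : m ∈ oplus πA πB) : πA.Sublist m := by
  obtain ⟨-, -, hA, -⟩ := hm
  exact hA ▸ List.filter_sublist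

theorem sublist_right_of_mem_oplus (hm : m ∈ oplus πA πB) : πB.Sublist m := by
  obtain ⟨-, -, -, hB⟩ := hm
  exact hB ▸ List.filter_sublist

theorem filter_mem_or_mem_mem_oplus (ht : t.Nodup) (hA : πA.Sublist t) (hB : πB.Sublist t) :
    t.filter (fun x => decide (x ∈ πA ∨ x ∈ πB)) ∈ oplus πA πB := by
  have mem_iff (x : α) :
      x ∈ t.filter (fun x => decide (x ∈ πA ∨ x ∈ πB)) ↔ x ∈ πA ∨ x ∈ πB := by
    rw [List.mem_filter, decide_eq_true_eq, and_iff_right_iff_imp]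
    rintro (hxA | hxB)
    exacts [hA.subset hxA, hB.subset hxB]
  refine ⟨ht.filter _, mem_iff, ?_, ?_⟩
  · refine eq_of_sublist_of_nodup_of_mem_iff ht
      (List.filter_sublist.trans List.filter_sublist) hA fun x => ?_
    rw [List.mem_filter, mem_iff, decide_eq_true_eq, and_iff_right_iff_imp]
    exact Or.inl
  · refine eq_of_sublist_of_nodup_of_mem_iff ht
      (List.filter_sublist.trans List.filter_sublist) hB fun x => ?_
    rw [List.mem_filter, mem_iff, decide_eq_true_eq, and_iff_right_iff_imp]
    exact Or.inr

theorem exists_mem_oplus_sublist_iff (ht : t.Nodup) :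
    (∃ m ∈ oplus πA πB, m.Sublist t) ↔ πA.Sublist t ∧ πB.Sublist t where
  mp := fun ⟨_, hm, hmt⟩ =>
    ⟨(sublist_left_of_mem_oplus hm).trans hmt, (sublist_right_of_mem_oplus hm).trans hmt⟩
  mpr := fun ⟨hA, hB⟩ => ⟨_, filter_mem_or_mem_mem_oplus ht hA hB, List.filter_sublist⟩

end Oplus

theorem filter_oplus_eq_inter_general {α : Type*} [DecidableEq α] (D : Multiset (List α))
    (hD : ∀ t ∈ D, t.Nodup) (πA πB : List α) :
    D.filter (fun t => ∃ m ∈ oplus πA πB, m.Sublist t) = gcl D πA ∩ gcl D πB := by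
  rw [gcl_inter_gcl]
  exact Multiset.filter_congr fun t ht => exists_mem_oplus_sublist_iff (hD t ht)

/-- the transactions containing some element of `πA ⊕ πB` are
exactly those in `g(πA) ∩ g(πB)`; consequently
`supp(πA ⊕ πB) = #(g(πA) ∩ g(πB))`. -/
theorem filter_oplus_eq_inter {α : Type*} [Fintype α] [DecidableEq α]
    (D : Multiset (List α)) (hD : ∀ t ∈ D, t.Nodup)
    (πA πB : List α) (hA : πA.Nodup) (hB : πB.Nodup) :
    D.filter (fun t => ∃ m ∈ oplus πA πB, m.Sublist t) = gcl D πA ∩ gcl D πB ∧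
      (D.filter (fun t => ∃ m ∈ oplus πA πB, m.Sublist t)).card =
        (gcl D πA ∩ gcl D πB).card :=
  have inter_eq := filter_oplus_eq_inter_general D hD πA πB
  ⟨inter_eq, congrArg Multiset.card inter_eq⟩
end

section
/- Let π_A ⇀ π_B be a consistent association rule (π_A ⊕ π_B ≠ ∅) with π_A, π_B duplicate-free lists, and let i ∈ entries(π_B). Then i is redundant in π_A ⇀ π_B if and only if i ∈ entries(π_A) and every item directly adjacent to i in the list π_B (its immediate predecessor and its immediate successor, when they exist) belongs to entries(π_A). -/
open scoped Classical

/-- An item `i ∈ entries(πB)` is redundant in the association rule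
`πA ⇀ πB` if removing it from the consequent does not change the set of
consistent combinations. -/
def Redundant {α : Type*} [DecidableEq α] (πA πB : List α) (i : α) : Prop :=
  i ∈ πB ∧ oplus πA πB = oplus πA (πB.erase i)

/-!
A redundant `i` lies in `πA`, since otherwise erasing it from `πB` changes the entries of the
combinations. For `i ∈ πA`, the combinations of `πA` with `πB.erase i` are those of `πA` with any
ranking obtained from `πB` by moving `i`; so `i` is redundant iff no such ranking other than `πB`
is consistent with `πA`. If a neighbour of `i` is not in `πA`, swapping it with `i` preserves
consistency, so `i` is not redundant. Conversely, every ranking consistent with `πA` orders the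
entries of `πA` as `πA` does, so `i` cannot jump over a neighbour lying in `πA`.
-/

section Lists

variable {α : Type*}

theorem exists_eq_append_of_filter_eq_append_cons_cons {p : α → Bool} {m s t : List α} {a b : α}
    (h : m.filter p = s ++ a :: b :: t) :
    ∃ u v w, m = u ++ a :: (v ++ b :: w) ∧
      u.filter p = s ∧ v.filter p = [] ∧ w.filter p = t := by
  obtain ⟨u₁, m₁, rfl, hu₁, hm₁⟩ := List.filter_eq_append_iff.1 h
  obtain ⟨u₂, m₂, rfl, hu₂, -, hm₂⟩ := List.filter_eq_cons_iff.1 hm₁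
  obtain ⟨v, w, rfl, hv, -, hw⟩ := List.filter_eq_cons_iff.1 hm₂
  refine ⟨u₁ ++ u₂, v, w, by simp, ?_, List.filter_eq_nil_iff.2 hv, hw⟩
  rw [List.filter_append, hu₁, List.filter_eq_nil_iff.2 hu₂, List.append_nil]

theorem exists_perm_filter_swap {p q : α → Bool} {m s t : List α} {a b : α}
    (hm : m.filter p = s ++ a :: b :: t) (hab : q a = false ∨ q b = false) :
    ∃ m' : List α, m'.Perm m ∧ m'.filter p = s ++ b :: a :: t ∧ m'.filter q = m.filter q := by
  have hpa : p a = true := List.of_mem_filter (l := m) (by simp [hm])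
  have hpb : p b = true := List.of_mem_filter (l := m) (by simp [hm])
  obtain ⟨u, v, w, rfl, hu, hv, hw⟩ := exists_eq_append_of_filter_eq_append_cons_cons hm
  rcases hab with hqa | hqb
  · refine ⟨u ++ (v ++ b :: a :: w), ?_, ?_, ?_⟩
    · exact (((List.Perm.swap a b w).append_left v).trans List.perm_middle).append_left u
    · simp [hu, hv, hw, hpa, hpb]
    · simp [List.filter_cons, hqa]
  · refine ⟨u ++ b :: a :: (v ++ w), ?_, ?_, ?_⟩
    · exact ((List.Perm.swap a b _).trans (List.perm_middle.symm.cons a)).append_left u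
    · simp [hu, hv, hw, hpa, hpb]
    · simp [List.filter_cons, hqb]

theorem eq_nil_of_cons_append_eq_append_cons {a : α} {l r : List α} (ha : a ∉ l)
    (h : a :: (l ++ r) = l ++ a :: r) : l = [] := by
  cases l with
  | nil => rfl
  | cons b l => exact absurd (List.cons.inj h).1 (List.ne_of_not_mem_cons ha)

variable [DecidableEq α]

theorem erase_append_cons_cons_swap {s : List α} {a : α} (ha : a ∉ s) (b : α) (t : List α) :
    (s ++ b :: a :: t).erase a = (s ++ a :: b :: t).erase a := by
  rw [List.erase_append_right _ ha, List.erase_append_right _ ha]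
  by_cases hba : b = a <;> simp [hba]

theorem eq_of_erase_eq_of_filter_eq {p : α → Bool} {B C : List α} {i : α}
    (hiB : i ∈ B) (hiC : i ∈ C) (hpi : p i = true)
    (hadj : ∀ j, [i, j] <:+: B ∨ [j, i] <:+: B → p j = true)
    (herase : C.erase i = B.erase i) (hfilter : C.filter p = B.filter p) : C = B := by
  obtain ⟨x, y, hx, rfl, hB⟩ := List.exists_erase_eq hiB
  obtain ⟨x', y', hx', rfl, hC⟩ := List.exists_erase_eq hiC
  rw [hB, hC] at herase
  -- `i` jumps over a block `z`; no entry of `z` satisfies `p`, so `z` cannot contain a neighbour of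
  -- `i` in `B`.
  rcases List.append_eq_append_iff.1 herase with ⟨z, rfl, rfl⟩ | ⟨z, rfl, rfl⟩
  · have hz : z.filter p = [] := by
      refine eq_nil_of_cons_append_eq_append_cons (a := i) (r := y.filter p) ?_ ?_
      · exact fun h => hx (List.mem_append_right _ (List.mem_of_mem_filter h))
      · simpa [hpi] using hfilter
    rcases List.eq_nil_or_concat z with rfl | ⟨z, b, rfl⟩
    · simp
    · have hpb : p b = true := hadj b (.inr ⟨x' ++ z, y, by simp⟩)
      simp [hpb] at hz
  · have hz : z.filter p = [] := by
      refine eq_nil_of_cons_append_eq_append_cons (a := i) (r := y'.filter p) ?_ ?_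
      · exact fun h => hx' (List.mem_append_right _ (List.mem_of_mem_filter h))
      · simpa [hpi] using hfilter.symm
    rcases z with _ | ⟨b, z⟩
    · simp
    · have hpb : p b = true := hadj b (.inl ⟨x, z ++ y', by simp⟩)
      simp [hpb] at hz

end Lists

section Combinations

variable {α : Type*} [DecidableEq α] {πA πB πC m : List α} {i : α}

theorem nodup_right_of_mem_oplus (hm : m ∈ oplus πA πB) : πB.Nodup :=
  hm.2.2.2 ▸ hm.1.filter _

theorem filter_mem_comm_of_oplus_nonempty (h : (oplus πA πB).Nonempty) :
    πB.filter (fun x => decide (x ∈ πA)) = πA.filter (fun x => decide (x ∈ πB)) := by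
  obtain ⟨m, -, -, hA, hB⟩ := h
  calc πB.filter (fun x => decide (x ∈ πA))
      = (m.filter (fun x => decide (x ∈ πB))).filter (fun x => decide (x ∈ πA)) := by rw [hB]
    _ = (m.filter (fun x => decide (x ∈ πA))).filter (fun x => decide (x ∈ πB)) :=
        List.filter_comm _ _ m
    _ = πA.filter (fun x => decide (x ∈ πB)) := by rw [hA]

theorem mem_oplus_iff_of_perm (h : πC.Perm πB) :
    m ∈ oplus πA πC ↔ m.Nodup ∧ (∀ x, x ∈ m ↔ x ∈ πA ∨ x ∈ πB) ∧
      m.filter (fun x => decide (x ∈ πA)) = πA ∧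
      m.filter (fun x => decide (x ∈ πB)) = πC := by
  simp only [oplus, Set.mem_ofPred_eq, h.mem_iff]

theorem eq_of_perm_of_mem_oplus (h : πC.Perm πB) (hC : m ∈ oplus πA πC)
    (hB : m ∈ oplus πA πB) : πC = πB :=
  ((mem_oplus_iff_of_perm h).1 hC).2.2.2.symm.trans hB.2.2.2

theorem oplus_swap_nonempty {s t : List α} {a b : α}
    (h : (oplus πA (s ++ a :: b :: t)).Nonempty) (hab : a ∉ πA ∨ b ∉ πA) :
    (oplus πA (s ++ b :: a :: t)).Nonempty := by
  obtain ⟨m, hnodup, hmem, hA, hB⟩ := h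
  obtain ⟨m', hperm, hB', hA'⟩ :=
    exists_perm_filter_swap (q := fun x => decide (x ∈ πA)) hB (by simpa using hab)
  exact ⟨m', (mem_oplus_iff_of_perm ((List.Perm.swap a b t).append_left s)).2
    ⟨hperm.nodup_iff.2 hnodup, fun x => hperm.mem_iff.trans (hmem x), hA'.trans hA, hB'⟩⟩

theorem mem_oplus_erase_iff (hB : πB.Nodup) (hiA : i ∈ πA) :
    m ∈ oplus πA (πB.erase i) ↔ m.Nodup ∧ (∀ x, x ∈ m ↔ x ∈ πA ∨ x ∈ πB) ∧
      m.filter (fun x => decide (x ∈ πA)) = πA ∧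
      (m.filter (fun x => decide (x ∈ πB))).erase i = πB.erase i := by
  have hentries (x : α) : x ∈ πA ∨ x ∈ πB.erase i ↔ x ∈ πA ∨ x ∈ πB := by
    by_cases hx : x = i
    · simp [hx, hiA]
    · simp [List.mem_erase_of_ne hx]
  simp only [oplus, Set.mem_ofPred_eq, hentries]
  refine and_congr_right fun hm => ?_
  have hfilter : m.filter (fun x => decide (x ∈ πB.erase i)) =
      (m.filter (fun x => decide (x ∈ πB))).erase i := by
    rw [(hm.filter _).erase_eq_filter, List.filter_filter]
    refine List.filter_congr fun x _ => ?_
    rw [Bool.eq_iff_iff]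
    simp [hB.mem_erase_iff]
  rw [hfilter]

theorem mem_oplus_erase_iff_exists_perm (hB : πB.Nodup) (hiA : i ∈ πA) :
    m ∈ oplus πA (πB.erase i) ↔
      ∃ πC : List α, πC.Perm πB ∧ πC.erase i = πB.erase i ∧ m ∈ oplus πA πC := by
  rw [mem_oplus_erase_iff hB hiA]
  constructor
  · rintro ⟨hnodup, hmem, hA, herase⟩
    have hperm : (m.filter (fun x => decide (x ∈ πB))).Perm πB :=
      (List.perm_ext_iff_of_nodup (hnodup.filter _) hB).2 fun x => by simp +contextual [hmem]
    exact ⟨_, hperm, herase, (mem_oplus_iff_of_perm hperm).2 ⟨hnodup, hmem, hA, rfl⟩⟩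
  · rintro ⟨πC, hperm, herase, hm⟩
    obtain ⟨hnodup, hmem, hA, rfl⟩ := (mem_oplus_iff_of_perm hperm).1 hm
    exact ⟨hnodup, hmem, hA, herase⟩

end Combinations

section Redundancy

variable {α : Type*} [DecidableEq α] {πA πB : List α} {i : α}

theorem Redundant.mem_left (hred : Redundant πA πB i) (hcons : (oplus πA πB).Nonempty) :
    i ∈ πA := by
  obtain ⟨m, hm⟩ := hcons
  have him : i ∈ m := (hm.2.1 i).2 (.inr hred.1)
  have hm' : m ∈ oplus πA (πB.erase i) := hred.2 ▸ hm
  exact ((hm'.2.1 i).1 him).resolve_right (nodup_right_of_mem_oplus hm).not_mem_erase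

theorem redundant_iff_forall_perm_eq (hB : πB.Nodup) (hiA : i ∈ πA) (hiB : i ∈ πB) :
    Redundant πA πB i ↔ ∀ πC : List α, πC.Perm πB → πC.erase i = πB.erase i →
      (oplus πA πC).Nonempty → πC = πB := by
  constructor
  · rintro ⟨-, hred⟩ πC hperm herase ⟨m, hm⟩
    refine eq_of_perm_of_mem_oplus hperm hm ?_
    rw [hred]
    exact (mem_oplus_erase_iff_exists_perm hB hiA).2 ⟨πC, hperm, herase, hm⟩
  · refine fun huniq => ⟨hiB, Set.ext fun m => ?_⟩
    rw [mem_oplus_erase_iff_exists_perm hB hiA]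
    constructor
    · exact fun hm => ⟨πB, .refl _, rfl, hm⟩
    · rintro ⟨πC, hperm, herase, hm⟩
      exact huniq πC hperm herase ⟨m, hm⟩ ▸ hm

theorem Redundant.mem_left_of_infix {a b : α} (hred : Redundant πA πB i)
    (hcons : (oplus πA πB).Nonempty) (hab : [a, b] <:+: πB) (hi : i = a ∨ i = b) :
    a ∈ πA ∧ b ∈ πA := by
  by_contra hnot
  have hB : πB.Nodup := nodup_right_of_mem_oplus hcons.some_mem
  have huniq := (redundant_iff_forall_perm_eq hB (hred.mem_left hcons) hred.1).1 hred
  obtain ⟨s, t, rfl⟩ := hab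
  simp only [List.append_assoc, List.cons_append, List.nil_append] at hB hcons huniq
  have hne : a ≠ b := List.ne_of_not_mem_cons (List.nodup_cons.1 hB.of_append_right).1
  have has : a ∉ s := fun h => List.disjoint_of_nodup_append hB h (by simp)
  have hbs : b ∉ s := fun h => List.disjoint_of_nodup_append hB h (by simp)
  have herase : (s ++ b :: a :: t).erase i = (s ++ a :: b :: t).erase i := by
    rcases hi with rfl | rfl
    · exact erase_append_cons_cons_swap has b t
    · exact (erase_append_cons_cons_swap hbs a t).symm
  have hswap : s ++ b :: a :: t = s ++ a :: b :: t :=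
    huniq _ ((List.Perm.swap a b t).append_left s) herase
      (oplus_swap_nonempty hcons (not_and_or.1 hnot))
  exact hne (List.cons.inj (List.append_cancel_left hswap)).1.symm

theorem redundant_of_adjacent_mem_left (hcons : (oplus πA πB).Nonempty) (hiA : i ∈ πA)
    (hiB : i ∈ πB) (hadj : ∀ j, [i, j] <:+: πB ∨ [j, i] <:+: πB → j ∈ πA) :
    Redundant πA πB i := by
  have hB : πB.Nodup := nodup_right_of_mem_oplus hcons.some_mem
  refine (redundant_iff_forall_perm_eq hB hiA hiB).2 fun πC hperm herase hconsC => ?_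
  have hfilter :=
    calc πC.filter (fun x => decide (x ∈ πA))
        = πA.filter (fun x => decide (x ∈ πC)) := filter_mem_comm_of_oplus_nonempty hconsC
      _ = πA.filter (fun x => decide (x ∈ πB)) := by simp only [hperm.mem_iff]
      _ = πB.filter (fun x => decide (x ∈ πA)) := (filter_mem_comm_of_oplus_nonempty hcons).symm
  exact eq_of_erase_eq_of_filter_eq hiB (hperm.mem_iff.2 hiB) (decide_eq_true hiA)
    (fun j hj => decide_eq_true (hadj j hj)) herase hfilter

theorem redundant_iff_adjacent_general (hcons : (oplus πA πB).Nonempty) (hi : i ∈ πB) :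
    Redundant πA πB i ↔
      (i ∈ πA ∧ ∀ j : α, ([i, j] <:+: πB ∨ [j, i] <:+: πB) → j ∈ πA) := by
  constructor
  · refine fun hred => ⟨hred.mem_left hcons, ?_⟩
    rintro j (hij | hji)
    · exact (hred.mem_left_of_infix hcons hij (.inl rfl)).2
    · exact (hred.mem_left_of_infix hcons hji (.inr rfl)).1
  · rintro ⟨hiA, hadj⟩
    exact redundant_of_adjacent_mem_left hcons hiA hi hadj

end Redundancy

/-- Lemma 2 of the paper: in a consistent rule `πA ⇀ πB`, an
item `i ∈ entries(πB)` is redundant iff `i ∈ entries(πA)` and every item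
directly adjacent to `i` in `πB` also belongs to `entries(πA)`. -/
theorem redundant_iff_adjacent {α : Type*} [Fintype α] [DecidableEq α]
    (πA πB : List α) (hA : πA.Nodup) (hB : πB.Nodup)
    (hcons : oplus πA πB ≠ ∅) (i : α) (hi : i ∈ πB) :
    Redundant πA πB i ↔
      (i ∈ πA ∧ ∀ j : α, ([i, j] <:+: πB ∨ [j, i] <:+: πB) → j ∈ πA) :=
  redundant_iff_adjacent_general (Set.nonempty_iff_ne_empty.2 hcons) hi
end

section
/- Let D be a database of duplicate-free lists over the finite type α and let π be a duplicate-free list with g(π) ≠ ∅. Then π ∈ h(π) if and only if every duplicate-free list π' with π a sublist of π' and π ≠ π' satisfies supp(π') < supp(π); that is, a ranking is closed exactly when it belongs to its own h-closure. -/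
open scoped Classical

/-- The (absolute) support of a ranking `π` in the database `D`. -/
noncomputable def supp {α : Type*} (D : Multiset (List α)) (π : List α) : ℕ :=
  (gcl D π).card

/-- `fcl T` is the set of maximal common subrankings of the multiset of
transactions `T`: duplicate-free lists that are sublists of every `t ∈ T`
and that admit no duplicate-free proper superlist with this property. -/
def fcl {α : Type*} (T : Multiset (List α)) : Set (List α) :=
  {m | m.Nodup ∧ (∀ t ∈ T, m.Sublist t) ∧
    ∀ m' : List α, m'.Nodup → m.Sublist m' → m ≠ m' → ∃ t ∈ T, ¬ m'.Sublist t}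

/-- The h-closure of a ranking `π` with respect to the database `D`. -/
noncomputable def hcl {α : Type*} (D : Multiset (List α)) (π : List α) :
    Set (List α) :=
  fcl (gcl D π)

/-!
The transactions containing a superlist `π'` of `π` are those transactions of `gcl D π` that
contain `π'`. Hence passing from `π` to `π'` lowers the support exactly when some transaction of
`gcl D π` misses `π'`, which is what maximality of `π` among the common sublists of `gcl D π` asks.
-/

section

variable {α : Type*} {D : Multiset (List α)} {π π' : List α}

theorem mem_gcl {t : List α} : t ∈ gcl D π ↔ t ∈ D ∧ π.Sublist t :=
  Multiset.mem_filter

theorem filter_sublist_gcl (h : π.Sublist π') :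
    (gcl D π).filter (fun t => π'.Sublist t) = gcl D π' := by
  rw [gcl, gcl, Multiset.filter_filter]
  exact Multiset.filter_congr fun t _ => and_iff_left_of_imp h.trans

theorem supp_lt_supp_iff (h : π.Sublist π') :
    supp D π' < supp D π ↔ ∃ t ∈ gcl D π, ¬ π'.Sublist t := by
  have supp_eq_countP : supp D π' = (gcl D π).countP (fun t => π'.Sublist t) := by
    rw [supp, ← filter_sublist_gcl h, Multiset.countP_eq_card_filter]
  calc supp D π' < supp D π
      ↔ (gcl D π).countP (fun t => π'.Sublist t) ≠ (gcl D π).card := by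
        rw [supp_eq_countP, supp, (Multiset.countP_le_card _ _).lt_iff_ne]
    _ ↔ ∃ t ∈ gcl D π, ¬ π'.Sublist t := by
        simp only [ne_eq, Multiset.countP_eq_card, not_forall, exists_prop]

theorem self_mem_hcl_iff :
    π ∈ hcl D π ↔ π.Nodup ∧ ∀ π' : List α, π'.Nodup → π.Sublist π' → π ≠ π' →
      ∃ t ∈ gcl D π, ¬ π'.Sublist t :=
  and_congr_right fun _ => and_iff_right fun _ ht => (mem_gcl.1 ht).2

theorem mem_hcl_iff_closed_general (hπ : π.Nodup) :
    π ∈ hcl D π ↔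
      ∀ π' : List α, π'.Nodup → π.Sublist π' → π ≠ π' → supp D π' < supp D π := by
  rw [self_mem_hcl_iff, and_iff_right hπ]
  exact forall₃_congr fun _ _ hsub => imp_congr_right fun _ => (supp_lt_supp_iff hsub).symm

end

/-- a ranking (with nonempty g-closure) is closed exactly when
it belongs to its own h-closure. -/
theorem mem_hcl_iff_closed {α : Type*} [Fintype α] [DecidableEq α]
    (D : Multiset (List α)) (hD : ∀ t ∈ D, t.Nodup)
    (π : List α) (hπ : π.Nodup) (hg : gcl D π ≠ 0) :
    π ∈ hcl D π ↔
      ∀ π' : List α, π'.Nodup → π.Sublist π' → π ≠ π' →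
        supp D π' < supp D π :=
  mem_hcl_iff_closed_general hπ
end

section
/- Let D be a database of duplicate-free lists over the finite type α and let π be a duplicate-free list with g(π) ≠ ∅. Then every ranking m in the h-closure h(π) is closed: supp(m) ≥ supp(π), and every duplicate-free list m' with m a sublist of m' and m ≠ m' satisfies supp(m') < supp(m). -/
open scoped Classical

/-!
Closedness holds for the maximal common subrankings of any transactions `T` drawn from `D`, and
`g(π)` is one such `T`. If `m` is maximal for `T`, a proper superranking `m'` of `m` misses some
`t ∈ T`; this `t` counts towards `supp m` but not towards `supp m'`, and `g(m') ≤ g(m)`.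
-/

section

variable {α : Type*} {D T : Multiset (List α)} {m m' t : List α}

theorem mem_gcl_s13 : t ∈ gcl D m ↔ t ∈ D ∧ m.Sublist t :=
  Multiset.mem_filter

theorem gcl_le : gcl D m ≤ D :=
  Multiset.filter_le _ D

theorem le_gcl : T ≤ gcl D m ↔ T ≤ D ∧ ∀ t ∈ T, m.Sublist t :=
  Multiset.le_filter

theorem gcl_le_gcl_of_sublist (h : m.Sublist m') : gcl D m' ≤ gcl D m :=
  Multiset.monotone_filter_right D fun _ => h.trans

theorem card_le_supp (hT : T ≤ D) (hcommon : ∀ t ∈ T, m.Sublist t) : T.card ≤ supp D m :=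
  Multiset.card_le_card (le_gcl.2 ⟨hT, hcommon⟩)

theorem supp_lt_supp_of_sublist (h : m.Sublist m') (ht : t ∈ D) (hmt : m.Sublist t)
    (hm't : ¬m'.Sublist t) : supp D m' < supp D m := by
  have hne : gcl D m' ≠ gcl D m := fun heq =>
    hm't (mem_gcl_s13.1 (heq ▸ mem_gcl_s13.2 ⟨ht, hmt⟩)).2
  exact Multiset.card_lt_card ((gcl_le_gcl_of_sublist h).lt_of_ne hne)

/-- Closedness of a ranking in the database `D`. As in `fcl`, a proper superranking is a
duplicate-free list `m' ≠ m` that has `m` as a sublist. -/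
def IsClosedRanking (D : Multiset (List α)) (m : List α) : Prop :=
  ∀ m' : List α, m'.Nodup → m.Sublist m' → m ≠ m' → supp D m' < supp D m

theorem isClosedRanking_of_mem_fcl (hT : T ⊆ D) (hm : m ∈ fcl T) : IsClosedRanking D m := by
  intro m' hnodup hsub hne
  obtain ⟨-, hcommon, hmax⟩ := hm
  obtain ⟨t, htT, hm't⟩ := hmax m' hnodup hsub hne
  exact supp_lt_supp_of_sublist hsub (hT htT) (hcommon t htT) hm't

theorem mem_hcl_closed_general (hT : T ≤ D) (hm : m ∈ fcl T) :
    T.card ≤ supp D m ∧ IsClosedRanking D m :=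
  ⟨card_le_supp hT hm.2.1, isClosedRanking_of_mem_fcl (Multiset.subset_of_le hT) hm⟩

end

/-- Proposition 2 of the paper: every ranking in the h-closure
of `π` is closed. -/
theorem mem_hcl_closed {α : Type*} [Fintype α] [DecidableEq α]
    (D : Multiset (List α)) (hD : ∀ t ∈ D, t.Nodup)
    (π : List α) (hπ : π.Nodup) (hg : gcl D π ≠ 0) :
    ∀ m ∈ hcl D π,
      supp D π ≤ supp D m ∧
        ∀ m' : List α, m'.Nodup → m.Sublist m' → m ≠ m' →
          supp D m' < supp D m :=
  fun _ hm => mem_hcl_closed_general gcl_le hm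
end

section
/- Let T and T' be multisets of duplicate-free lists over the finite type α with T' ≠ ∅ and every element of T' also an element of T. Then for every maximal common subranking m ∈ f(T) there exists m' ∈ f(T') such that m is a sublist of m': rankings contained in a maximal intersection of transactions can only grow when the set of transactions is reduced. -/
/-!
A maximal common subranking `m` of `T` is still a common subranking of `T'`. Since `T'` has a
transaction `t` and `t` has only finitely many sublists, one of the common subrankings of `T'`
extending `m` has greatest length. It is maximal, because a proper superlist is strictly longer.
-/

open scoped Classical

section CommonSubrankings

variable {α : Type*} {T T' : Multiset (List α)} {m : List α}

/-- The common subrankings of `T`, maximal or not; `fcl T` consists of the maximal ones. For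
`T = 0` these are all the duplicate-free lists. -/
def commonSubrankings (T : Multiset (List α)) : Set (List α) :=
  {m | m.Nodup ∧ ∀ t ∈ T, m.Sublist t}

theorem fcl_subset_commonSubrankings : fcl T ⊆ commonSubrankings T :=
  fun _ hm => ⟨hm.1, hm.2.1⟩

theorem commonSubrankings_anti (h : T' ⊆ T) : commonSubrankings T ⊆ commonSubrankings T' :=
  fun _ hm => ⟨hm.1, fun t ht => hm.2 t (h ht)⟩

theorem finite_commonSubrankings (hT : T ≠ 0) : (commonSubrankings T).Finite := by
  obtain ⟨t, ht⟩ := Multiset.exists_mem_of_ne_zero hT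
  exact (List.finite_toSet t.sublists).subset fun _ hm => List.mem_sublists.2 (hm.2 t ht)

theorem mem_fcl_of_forall_length_le (hm : m ∈ commonSubrankings T)
    (hmax : ∀ m' ∈ commonSubrankings T, m.Sublist m' → m'.length ≤ m.length) : m ∈ fcl T := by
  refine ⟨hm.1, hm.2, fun m' hnodup hsub hne => ?_⟩
  by_contra! hcommon
  exact hne (hsub.eq_of_length_le (hmax m' ⟨hnodup, hcommon⟩ hsub))

theorem exists_mem_fcl_sublist (hfin : (commonSubrankings T).Finite)
    (hm : m ∈ commonSubrankings T) : ∃ m' ∈ fcl T, m.Sublist m' := by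
  obtain ⟨m', ⟨hm', hsub⟩, hlongest⟩ :=
    Set.exists_max_image {l ∈ commonSubrankings T | m.Sublist l} List.length
      (hfin.sep _) ⟨m, hm, List.Sublist.refl m⟩
  exact ⟨m', mem_fcl_of_forall_length_le hm' fun l hl hl' => hlongest l ⟨hl, hsub.trans hl'⟩, hsub⟩

theorem fcl_grows_of_subset_general (hne : T' ≠ 0) (hsub : T' ⊆ T) (hm : m ∈ fcl T) :
    ∃ m' ∈ fcl T', m.Sublist m' :=
  exists_mem_fcl_sublist (finite_commonSubrankings hne)
    (commonSubrankings_anti hsub (fcl_subset_commonSubrankings hm))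

end CommonSubrankings

/-- rankings contained in a maximal intersection of
transactions can only grow when the set of transactions is reduced. -/
theorem fcl_grows_of_subset {α : Type*} [Fintype α] [DecidableEq α]
    (T T' : Multiset (List α))
    (hT : ∀ t ∈ T, t.Nodup) (hT' : ∀ t ∈ T', t.Nodup)
    (hne : T' ≠ 0) (hsub : ∀ t ∈ T', t ∈ T) :
    ∀ m ∈ fcl T, ∃ m' ∈ fcl T', m.Sublist m' :=
  fun _ hm => fcl_grows_of_subset_general hne hsub hm
end

section
/- Let l and l' be duplicate-free lists over α with the same set of entries. If for all a, b ∈ α the two-element list [a, b] is a sublist of l exactly when it is a sublist of l', then l = l': a ranking is uniquely determined by its set of pairwise preferences. -/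
/-!
The preference relation of a duplicate-free ranking `l` is asymmetric, and `l` is sorted by it. If
every pairwise preference of `l'` also holds in `l`, then `l'` is sorted by this same relation, and
two lists with the same entries that are sorted by one asymmetric relation are equal.
-/

section

open scoped List

variable {α : Type*} {l : List α}

theorem eq_of_perm_of_sublist_of_nodup (hl : l.Nodup) {s t : List α} (hs : s <+ l) (ht : t <+ l)
    (hst : s ~ t) : s = t := by
  induction l generalizing s t with
  | nil => rw [List.sublist_nil.mp hs, List.sublist_nil.mp ht]
  | cons x l ih =>
    obtain ⟨hx, hl⟩ := List.nodup_cons.mp hl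
    cases hs with
    | cons _ hs =>
      cases ht with
      | cons _ ht => exact ih hl hs ht hst
      | cons_cons _ _ => exact (hx (hs.subset (hst.symm.subset List.mem_cons_self))).elim
    | cons_cons _ hs =>
      cases ht with
      | cons _ ht => exact (hx (ht.subset (hst.subset List.mem_cons_self))).elim
      | cons_cons _ ht => rw [ih hl hs ht hst.cons_inv]

theorem asymm_pair_sublist_of_nodup (hl : l.Nodup) : Std.Asymm fun a b => [a, b] <+ l where
  asymm a b hab hba := by
    obtain rfl : a = b :=
      List.head_eq_of_cons_eq (eq_of_perm_of_sublist_of_nodup hl hab hba (.swap b a []))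
    exact List.nodup_iff_sublist.mp hl a hab

theorem eq_of_pairwise_preferences_general (l l' : List α) (hl : l.Nodup)
    (hent : ∀ x, x ∈ l ↔ x ∈ l') (hpairs : ∀ a b, [a, b] <+ l' → [a, b] <+ l) : l = l' := by
  have : Std.Asymm fun a b => [a, b] <+ l := asymm_pair_sublist_of_nodup hl
  have sorted_l : l.Pairwise fun a b => [a, b] <+ l := List.pairwise_of_forall_sublist id
  have sorted_l' : l'.Pairwise fun a b => [a, b] <+ l :=
    List.pairwise_of_forall_sublist (hpairs _ _)
  exact sorted_l.eq_of_mem_iff sorted_l' hent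

end

/-- a ranking is uniquely determined by its set of pairwise
preferences: duplicate-free lists with the same entries and the same
two-element sublists are equal. -/
theorem eq_of_pairwise_preferences {α : Type*} [Fintype α] [DecidableEq α]
    (l l' : List α) (hl : l.Nodup) (hl' : l'.Nodup)
    (hent : ∀ x : α, x ∈ l ↔ x ∈ l')
    (hpairs : ∀ a b : α, [a, b].Sublist l ↔ [a, b].Sublist l') :
    l = l' :=
  eq_of_pairwise_preferences_general l l' hl hent fun a b => (hpairs a b).mpr
end
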